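/- arXiv:1604.04682 — 6 statements merged into one kernel-verified Lean document; each statement's English description precedes it below -/
import Mathlib

section
/- For every commutative ring R, every a ∈ R, and every natural number n, the n-th Dickson polynomial of the third kind F_n(x,a) (defined by F_0 = 0, F_1 = x, and F_{m+2} = x·F_{m+1} − a·F_m) satisfies the polynomial identity (x² − 4a)·F_n''(x,a) + 3x·F_n'(x,a) − n²·F_n(x,a) = 2n·D_n(x,a), where D_n(x,a) is the n-th Dickson polynomial of the first kind (defined by D_0 = 2, D_1 = x, D_{m+2} = x·D_{m+1} − a·D_m) and primes denote formal polynomial derivatives. -/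
open Polynomial

noncomputable def dkG {R : Type*} [CommRing R] (a : R) : ℕ → R[X]
  | 0 => 0
  | 1 => 1
  | n + 2 => X * dkG a (n + 1) - C a * dkG a n

theorem dkG_add_two {R : Type*} [CommRing R] (a : R) (n : ℕ) :
    dkG a (n + 2) = X * dkG a (n + 1) - C a * dkG a n := by rw [dkG]

theorem dk_third {R : Type*} [CommRing R] (a : R) (n : ℕ) :
    dickson 3 a n = X * dkG a n ∧ dickson 3 a (n + 1) = X * dkG a (n + 1) := by
  induction n with
  | zero => simp [dkG]
  | succ n ih =>
    refine ⟨ih.2, ?_⟩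
    rw [dickson_add_two, dkG_add_two, ih.1, ih.2]; ring

theorem dk_first {R : Type*} [CommRing R] (a : R) (n : ℕ) :
    dickson 1 a n = 2 * dkG a (n + 1) - X * dkG a n ∧
    dickson 1 a (n + 1) = 2 * dkG a (n + 2) - X * dkG a (n + 1) := by
  induction n with
  | zero => simp [dkG]; constructor <;> ring
  | succ n ih =>
    refine ⟨ih.2, ?_⟩
    rw [dickson_add_two, ih.1, ih.2, dkG_add_two a (n + 1), dkG_add_two a n]; ring

theorem dk_D' {R : Type*} [CommRing R] (a : R) (n : ℕ) :
    derivative (dickson 1 a n) = (n : R[X]) * dkG a n ∧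
    derivative (dickson 1 a (n + 1)) = ((n + 1 : ℕ) : R[X]) * dkG a (n + 1) := by
  induction n with
  | zero =>
    have : (3 - 1 : R[X]) = C (3 - 1) := by rw [C_sub, C_1]; rfl
    simp [dkG, this, -map_sub]
  | succ n ih =>
    refine ⟨ih.2, ?_⟩
    rw [dickson_add_two, derivative_sub, derivative_mul, derivative_C_mul, derivative_X,
      ih.1, ih.2, (dk_first a n).2, dkG_add_two a n]
    push_cast
    ring

theorem dk_G' {R : Type*} [CommRing R] (a : R) (n : ℕ) :
    (X ^ 2 - C (4 * a)) * derivative (dkG a n) = (n : R[X]) * dickson 1 a n - X * dkG a n ∧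
    (X ^ 2 - C (4 * a)) * derivative (dkG a (n + 1)) =
      ((n + 1 : ℕ) : R[X]) * dickson 1 a (n + 1) - X * dkG a (n + 1) := by
  induction n with
  | zero => simp [dkG]
  | succ n ih =>
    refine ⟨ih.2, ?_⟩
    have h4 : C (4 * a) = 4 * C a := by rw [C_mul]; rfl
    obtain ⟨h1, h2⟩ := ih
    have h3 := (dk_first a n).1
    have h5 := (dk_first a n).2
    rw [dkG_add_two a n] at h5
    rw [dickson_add_two, dkG_add_two a n, derivative_sub, derivative_mul, derivative_C_mul,
      derivative_X]
    rw [h4] at *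
    push_cast at *
    rw [h3] at h1
    rw [h5] at h2
    rw [h3, h5]
    linear_combination X * h2 - C a * h1

/-- The Dickson polynomials of the third kind `F n = dickson 3 a n` satisfy the
non-homogeneous second-order differential identity
`(x² − 4a)·F_n'' + 3x·F_n' − n²·F_n = 2n·D_n`, where `D n = dickson 1 a n` is the
Dickson polynomial of the first kind. -/
theorem dickson_third_kind_ode (R : Type*) [CommRing R] (a : R) (n : ℕ) :
    (X ^ 2 - C (4 * a)) * derivative (derivative (dickson 3 a n))
      + 3 * X * derivative (dickson 3 a n)
      - (n : R[X]) ^ 2 * dickson 3 a n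
    = 2 * (n : R[X]) * dickson 1 a n := by
  have h1 := (dk_G' a n).1
  have h2 := congrArg derivative h1
  simp only [derivative_mul, derivative_sub, derivative_X_pow, derivative_C, derivative_X,
    derivative_natCast, (dk_D' a n).1] at h2
  rw [(dk_third a n).1]
  simp only [derivative_mul, derivative_add, derivative_X, derivative_one]
  have e : (C 2 : R[X]) = 2 := rfl
  simp [e] at h1 h2 ⊢
  linear_combination X * h2 + 2 * h1
end

section
/- For every commutative ring R, every a ∈ R, and every natural number n, the n-th Dickson polynomial of the first kind D_n(x,a) satisfies the homogeneous polynomial differential identity (x² − 4a)·D_n''(x,a) + x·D_n'(x,a) − n²·D_n(x,a) = 0, where primes denote formal polynomial derivatives. -/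
open Polynomial

theorem dk_aux1 {R : Type*} [CommRing R] (a : R) : ∀ n : ℕ,
    dickson 1 a (n + 1) = 2 * dickson 2 a (n + 1) - X * dickson 2 a n
  | 0 => by simp; ring
  | 1 => by simp [dickson_add_two]; ring
  | n + 2 => by
    have h1 := dk_aux1 a n
    have h2 := dk_aux1 a (n + 1)
    have e1 := dickson_add_two 1 a (n + 1)
    have e2 := dickson_add_two 2 a (n + 1)
    have e3 := dickson_add_two 2 a n
    linear_combination e1 + X * h2 - C a * h1 - 2 * e2 + X * e3

theorem dk_aux2 {R : Type*} [CommRing R] (a : R) : ∀ n : ℕ,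
    derivative (dickson 1 a (n + 1)) = ((n : R[X]) + 1) * dickson 2 a n
  | 0 => by simp; ring
  | 1 => by simp [dickson_add_two]; ring
  | n + 2 => by
    have h1 := dk_aux2 a n
    have h2 := dk_aux2 a (n + 1)
    have e1 := congrArg derivative (dickson_add_two 1 a (n + 1))
    have e3 := dickson_add_two 2 a n
    have h := dk_aux1 a (n + 1)
    simp only [derivative_sub, derivative_mul, derivative_X, derivative_C] at e1
    push_cast at *
    linear_combination e1 + X * h2 - C a * h1 + h - (n + 1) * e3

theorem dk_aux3 {R : Type*} [CommRing R] (a : R) : ∀ n : ℕ,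
    (X ^ 2 - 4 * C a) * derivative (dickson 2 a n) =
      ((n : R[X]) + 1) * dickson 1 a (n + 1) - X * dickson 2 a n
  | 0 => by simp; ring
  | 1 => by simp [dickson_add_two]; ring
  | n + 2 => by
    have h1 := dk_aux3 a n
    have h2 := dk_aux3 a (n + 1)
    have e1 := dickson_add_two 1 a (n + 1)
    have e2 := congrArg derivative (dickson_add_two 2 a n)
    have e3 := dickson_add_two 2 a n
    have h := dk_aux1 a (n + 1)
    have h' := dk_aux1 a n
    simp only [derivative_sub, derivative_mul, derivative_X, derivative_C] at e2
    push_cast at *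
    linear_combination (X ^ 2 - 4 * C a) * e2 + X * h2 - C a * h1 - (n + 3) * e1
      - X * h + 2 * C a * h' - X * e3

/-- The Dickson polynomials of the first kind `D n = dickson 1 a n` satisfy the
homogeneous second-order differential identity
`(x² − 4a)·D_n'' + x·D_n' − n²·D_n = 0`. -/
theorem dickson_first_kind_ode (R : Type*) [CommRing R] (a : R) (n : ℕ) :
    (X ^ 2 - C (4 * a)) * derivative (derivative (dickson 1 a n))
      + X * derivative (dickson 1 a n)
      - (n : R[X]) ^ 2 * dickson 1 a n = 0 := by
  cases n with
  | zero => simp [derivative_ofNat]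
  | succ m =>
    have h := dk_aux3 a m
    have hc : (C (4 * a) : R[X]) = 4 * C a := by rw [C_mul]; rfl
    rw [dk_aux2, hc]
    simp only [derivative_mul, derivative_add, derivative_natCast, derivative_one]
    push_cast
    linear_combination ((m : R[X]) + 1) * h
end

section
/- Let a be a nonzero complex number, n a natural number, and p ∈ ℂ[x] a polynomial satisfying (x² − 4a)·p'' + 3x·p' − n²·p = 2n·D_n(x,a), where D_n(x,a) is the n-th Dickson polynomial of the first kind. Then for every natural number k such that n − k is odd, the coefficients b_j of p satisfy the recurrence b_{k+2} = −(n² − k(k+2))/(4a(k+2)(k+1))·b_k. -/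
open Polynomial

theorem dickson_coeff_parity (a : ℂ) : ∀ (n k : ℕ), Odd (n + k) → (dickson 1 a n).coeff k = 0
  | 0, k, h => by
    have hk : k ≠ 0 := by rintro rfl; simp at h
    have : dickson 1 a 0 = C (2 : ℂ) := by
      rw [dickson_zero, show (C (2 : ℂ)) = (2 : ℂ[X]) from rfl]; norm_num
    rw [this, coeff_C, if_neg hk]
  | 1, k, h => by
    have hk : 1 ≠ k := by rintro rfl; exact absurd h (by decide)
    rw [dickson_one, coeff_X, if_neg hk]
  | n + 2, k, h => by
    rw [dickson_add_two, coeff_sub, coeff_C_mul,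
      dickson_coeff_parity a n k (by grind)]
    cases k with
    | zero => simp
    | succ k =>
      rw [coeff_X_mul, dickson_coeff_parity a (n + 1) k (by grind)]
      simp

/-- If a polynomial `p` over `ℂ` satisfies the non-homogeneous Dickson differential
equation `(x² − 4a)p'' + 3xp' − n²p = 2n·D_n(x,a)` with `a ≠ 0`, then for every `k`
with `n − k` odd, the coefficients satisfy
`b_{k+2} = −(n² − k(k+2))/(4a(k+2)(k+1))·b_k`. -/
theorem dickson_particular_coeff_odd (a : ℂ) (ha : a ≠ 0) (n : ℕ) (p : ℂ[X])
    (hp : (X ^ 2 - C (4 * a)) * derivative (derivative p) + 3 * X * derivative p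
        - (n : ℂ[X]) ^ 2 * p = 2 * (n : ℂ[X]) * dickson 1 a n)
    (k : ℕ) (hk : Odd ((n : ℤ) - (k : ℤ))) :
    p.coeff (k + 2)
      = -(((n : ℂ) ^ 2 - (k : ℂ) * ((k : ℂ) + 2))
          / (4 * a * ((k : ℂ) + 2) * ((k : ℂ) + 1))) * p.coeff k := by
  have hd := dickson_coeff_parity a n k (by grind)
  have h1 : (k : ℂ) + 1 ≠ 0 := by exact_mod_cast Nat.succ_ne_zero k
  have h2 : (k : ℂ) + 2 ≠ 0 := by exact_mod_cast Nat.succ_ne_zero (k + 1)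
  have hp' : X * (X * derivative (derivative p)) - C (4 * a) * derivative (derivative p)
      + C 3 * (X * derivative p) - C ((n : ℂ) ^ 2) * p = C (2 * (n : ℂ)) * dickson 1 a n := by
    have e3 : (C (3 : ℂ)) = (3 : ℂ[X]) := rfl
    have e2 : (C (2 : ℂ)) = (2 : ℂ[X]) := rfl
    rw [C_mul (a := (2 : ℂ)), C_pow, e3, e2, C_eq_natCast, ← hp]
    ring
  have hc := congrArg (fun q => coeff q k) hp'
  simp only [coeff_sub, coeff_add, coeff_C_mul, hd, mul_zero] at hc
  have hx : (X * (X * derivative (derivative p))).coeff k = (k : ℂ) * (k - 1) * p.coeff k := by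
    rcases k with _ | _ | k
    · simp
    · simp
    · simp only [coeff_X_mul, coeff_derivative]; push_cast; ring
  have hx1 : (X * derivative p).coeff k = (k : ℂ) * p.coeff k := by
    rcases k with _ | k
    · simp
    · simp only [coeff_X_mul, coeff_derivative]; push_cast; ring
  rw [hx, hx1] at hc
  simp only [coeff_derivative] at hc
  push_cast at hc
  field_simp
  linear_combination -hc
end

section
/- For every a ∈ ℂ and every natural number n ≥ 1, the n-th Dickson polynomial of the first kind satisfies Waring's formula: D_n(x,a) = Σ_{i=0}^{⌊n/2⌋} (n/(n−i))·C(n−i, i)·(−a)^i·x^{n−2i}, where C(·,·) denotes the binomial coefficient and the scalar n/(n−i) is the complex number n divided by n−i. -/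
open Polynomial

noncomputable def wTerm (a : ℂ) (n i : ℕ) : ℂ[X] :=
  C ((n : ℂ) / ((n : ℂ) - (i : ℂ)) * ((n - i).choose i : ℂ) * (-a) ^ i) * X ^ (n - 2 * i)

lemma wTerm_zero_of_lt (a : ℂ) (n i : ℕ) (h : n < 2 * i) : wTerm a n i = 0 := by
  have : (n - i).choose i = 0 := Nat.choose_eq_zero_of_lt (by omega)
  simp [wTerm, this]

lemma wCoeff (i m : ℕ) (h : 1 ≤ i + m) :
    ((2 * i + m + 2 : ℕ) : ℂ) / (((2 * i + m + 2 : ℕ) : ℂ) - ((i + 1 : ℕ) : ℂ))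
        * ((i + m + 1).choose (i + 1) : ℂ)
      = ((2 * i + m + 1 : ℕ) : ℂ) / (((2 * i + m + 1 : ℕ) : ℂ) - ((i + 1 : ℕ) : ℂ))
        * ((i + m).choose (i + 1) : ℂ)
      + ((2 * i + m : ℕ) : ℂ) / (((2 * i + m : ℕ) : ℂ) - (i : ℂ)) * ((i + m).choose i : ℂ) := by
  have h1 := Nat.add_one_mul_choose_eq (i + m) i
  have h2 := Nat.choose_succ_right_eq (i + m) i
  rw [Nat.add_sub_cancel_left] at h2
  have h1' : ((i + m + 1).choose (i + 1) : ℂ) = (i + m + 1) * ((i + m).choose i : ℂ) / (i + 1) := by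
    rw [eq_div_iff (Nat.cast_add_one_ne_zero i)]
    exact_mod_cast h1.symm
  have h2' : ((i + m).choose (i + 1) : ℂ) = ((i + m).choose i : ℂ) * m / (i + 1) := by
    rw [eq_div_iff (Nat.cast_add_one_ne_zero i)]
    exact_mod_cast h2
  rw [h1', h2']
  have e0 : (i : ℂ) + 1 ≠ 0 := Nat.cast_add_one_ne_zero i
  have e1 : (i : ℂ) + m ≠ 0 := by
    have : i + m ≠ 0 := by omega
    exact_mod_cast this
  have e2 : (i : ℂ) + m + 1 ≠ 0 := by exact_mod_cast Nat.succ_ne_zero (i + m)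
  push_cast
  rw [show (2 * i + m + 2 - (i + 1) : ℂ) = i + m + 1 by ring,
    show (2 * i + m + 1 - (i + 1) : ℂ) = i + m by ring,
    show (2 * i + m - i : ℂ) = i + m by ring]
  field_simp
  ring

lemma wTerm_rec (a : ℂ) (n i : ℕ) (hn : 1 ≤ n) :
    wTerm a (n + 2) (i + 1) = X * wTerm a (n + 1) (i + 1) - C a * wTerm a n i := by
  rcases lt_or_ge n (2 * i) with h | h
  · rw [wTerm_zero_of_lt _ _ _ h, wTerm_zero_of_lt _ (n + 2) _ (by omega),
      wTerm_zero_of_lt _ (n + 1) _ (by omega)]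
    simp
  obtain ⟨m, rfl⟩ := Nat.exists_eq_add_of_le h
  have hw := wCoeff i m (by omega)
  have hX : X * wTerm a (2 * i + m + 1) (i + 1)
      = C (((2 * i + m + 1 : ℕ) : ℂ) / (((2 * i + m + 1 : ℕ) : ℂ) - ((i + 1 : ℕ) : ℂ))
        * ((i + m).choose (i + 1) : ℂ) * (-a) ^ (i + 1)) * X ^ m := by
    unfold wTerm
    rw [show 2 * i + m + 1 - (i + 1) = i + m by omega]
    rcases m with _ | m
    · simp
    · rw [show 2 * i + (m + 1) + 1 - 2 * (i + 1) = m by omega]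
      ring
  rw [hX]
  unfold wTerm
  rw [show 2 * i + m + 2 - (i + 1) = i + m + 1 by omega,
    show 2 * i + m + 2 - 2 * (i + 1) = m by omega,
    show 2 * i + m - i = i + m by omega, show 2 * i + m - 2 * i = m by omega, hw,
    ← mul_assoc, ← C_mul, ← sub_mul, ← C_sub]
  congr 2
  ring

lemma wTerm_zero_right (a : ℂ) (n : ℕ) (hn : 1 ≤ n) : wTerm a n 0 = X ^ n := by
  have : (n : ℂ) ≠ 0 := by exact_mod_cast (by omega : n ≠ 0)
  simp [wTerm, this]

lemma wSum (a : ℂ) (n : ℕ) : ∀ N, n + 1 < 2 * N →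
    dickson 1 a (n + 1) = ∑ i ∈ Finset.range N, wTerm a (n + 1) i := by
  induction n using Nat.strong_induction_on with
  | _ n ih =>
    intro N hN
    obtain ⟨N, rfl⟩ : ∃ M, N = M + 1 := ⟨N - 1, by omega⟩
    rw [Finset.sum_range_succ', wTerm_zero_right _ _ (by omega)]
    match n, ih, hN with
    | 0, _, _ =>
      rw [Finset.sum_eq_zero (fun i _ => wTerm_zero_of_lt _ _ _ (by omega))]
      simp
    | 1, _, hN =>
      obtain ⟨N, rfl⟩ : ∃ M, N = M + 1 := ⟨N - 1, by omega⟩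
      rw [Finset.sum_range_succ',
        Finset.sum_eq_zero (fun i _ => wTerm_zero_of_lt _ _ _ (by omega))]
      have h2 : wTerm a 2 1 = C (2 * -a) := by
        norm_num [wTerm]
      simp only [zero_add, Nat.reduceAdd, h2, dickson_two]
      simp only [C_mul, C_neg, Nat.cast_one]
      rw [show (C (2 : ℂ)) = (2 : ℂ[X]) from rfl]
      ring
    | n + 2, ih, hN =>
      rw [show n + 2 + 1 = (n + 1) + 2 by ring, dickson_add_two,
        show n + 1 + 1 = (n + 1) + 1 from rfl, ih (n + 1) (by omega) (N + 1) (by omega),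
        ih n (by omega) N (by omega),
        Finset.sum_congr rfl (fun i _ => wTerm_rec a (n + 1) i (by omega)),
        Finset.sum_sub_distrib, ← Finset.mul_sum, ← Finset.mul_sum,
        Finset.sum_range_succ', wTerm_zero_right _ _ (by omega)]
      ring

/-- Waring's formula for the Dickson polynomials of the first kind over `ℂ`:
`D_n(x,a) = Σ_{i=0}^{⌊n/2⌋} (n/(n−i))·C(n−i,i)·(−a)^i·x^{n−2i}` for `n ≥ 1`. -/
theorem dickson_first_kind_waring (a : ℂ) (n : ℕ) (hn : 1 ≤ n) :
    dickson 1 a n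
      = ∑ i ∈ Finset.range (n / 2 + 1),
          C ((n : ℂ) / ((n : ℂ) - (i : ℂ)) * ((n - i).choose i : ℂ) * (-a) ^ i)
            * X ^ (n - 2 * i) := by
  obtain ⟨m, rfl⟩ : ∃ m, n = m + 1 := ⟨n - 1, by omega⟩
  exact wSum a m _ (by omega)
end

section
/- For every commutative ring R, every a ∈ R, and every natural number n, the n-th Dickson polynomial of the second kind satisfies the explicit formula E_n(x,a) = Σ_{i=0}^{⌊n/2⌋} C(n−i, i)·(−a)^i·x^{n−2i}, where C(·,·) denotes the binomial coefficient. -/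
open Polynomial

theorem dickson_aux_extend (R : Type*) [CommRing R] (a : R) (n M : ℕ) (h : n / 2 + 1 ≤ M) :
    ∑ i ∈ Finset.range (n / 2 + 1),
          C ((((n - i).choose i : ℕ) : R) * (-a) ^ i) * X ^ (n - 2 * i)
      = ∑ i ∈ Finset.range M,
          C ((((n - i).choose i : ℕ) : R) * (-a) ^ i) * X ^ (n - 2 * i) := by
  apply Finset.sum_subset
  · intro i hi
    simp only [Finset.mem_range] at *
    omega
  · intro i _ hi
    simp only [Finset.mem_range] at hi
    rw [Nat.choose_eq_zero_of_lt (by omega)]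
    simp

theorem dickson_aux_term (R : Type*) [CommRing R] (a : R) (n i : ℕ) :
    C ((((n + 2 - (i + 1)).choose (i + 1) : ℕ) : R) * (-a) ^ (i + 1)) * X ^ (n + 2 - 2 * (i + 1))
      = X * (C ((((n + 1 - (i + 1)).choose (i + 1) : ℕ) : R) * (-a) ^ (i + 1))
            * X ^ (n + 1 - 2 * (i + 1)))
        - C a * (C ((((n - i).choose i : ℕ) : R) * (-a) ^ i) * X ^ (n - 2 * i)) := by
  have e1 : n + 1 - (i + 1) = n - i := by omega
  have e2 : n + 2 - 2 * (i + 1) = n - 2 * i := by omega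
  rw [e1, e2]
  by_cases hi : n < 2 * i
  · rw [Nat.choose_eq_zero_of_lt (show n + 2 - (i + 1) < i + 1 by omega),
      Nat.choose_eq_zero_of_lt (show n - i < i + 1 by omega),
      Nat.choose_eq_zero_of_lt (show n - i < i by omega)]
    simp
  · have e3 : n + 2 - (i + 1) = (n - i) + 1 := by omega
    rw [e3, Nat.choose_succ_succ]
    by_cases h2 : n = 2 * i
    · rw [Nat.choose_eq_zero_of_lt (show n - i < i.succ by omega)]
      simp only [add_zero, Nat.cast_zero, zero_mul, C_0, mul_zero, zero_sub, C_mul, C_pow, C_neg]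
      ring
    · have e4 : n - 2 * i = (n + 1 - 2 * (i + 1)) + 1 := by omega
      rw [e4]
      simp only [Nat.cast_add, C_mul, C_add, C_pow, C_neg, Nat.succ_eq_add_one]
      ring

/-- Explicit formula for the Dickson polynomials of the second kind:
`E_n(x,a) = Σ_{i=0}^{⌊n/2⌋} C(n−i,i)·(−a)^i·x^{n−2i}`. -/
theorem dickson_second_kind_explicit (R : Type*) [CommRing R] (a : R) (n : ℕ) :
    dickson 2 a n
      = ∑ i ∈ Finset.range (n / 2 + 1),
          C ((((n - i).choose i : ℕ) : R) * (-a) ^ i) * X ^ (n - 2 * i) := by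
  induction n using Nat.strong_induction_on with
  | _ n ih =>
    match n, ih with
    | 0, _ => simp; norm_num
    | 1, _ => simp
    | n + 2, ih =>
      rw [dickson_add_two, ih (n + 1) (by omega), ih n (by omega),
        dickson_aux_extend R a (n + 1) (n + 2) (by omega),
        dickson_aux_extend R a n (n + 1) (by omega),
        dickson_aux_extend R a (n + 2) (n + 2) (by omega),
        Finset.sum_range_succ' _ (n + 1), Finset.sum_range_succ' _ (n + 1),
        Finset.sum_congr rfl (fun i _ => dickson_aux_term R a n i),
        Finset.sum_sub_distrib, ← Finset.mul_sum, ← Finset.mul_sum]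
      simp only [Nat.sub_zero, Nat.choose_zero_right, Nat.cast_one, pow_zero, mul_one, C_1,
        one_mul, mul_zero]
      ring
end

section
/- For every a ∈ ℂ and every natural number n ≥ 1, the n-th Dickson polynomial of the third kind satisfies the explicit formula F_n(x,a) = Σ_{i=0}^{⌊n/2⌋} ((n−2i)/(n−i))·C(n−i, i)·(−a)^i·x^{n−2i}, where C(·,·) denotes the binomial coefficient and the scalar (n−2i)/(n−i) is computed in ℂ. -/
open Polynomial

noncomputable def dkTerm (a : ℂ) (i j : ℕ) : ℂ[X] :=
  C ((j.choose i : ℂ) * (-a) ^ i) * X ^ (j - i)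

noncomputable def dkE (a : ℂ) (n : ℕ) : ℂ[X] :=
  ∑ p ∈ Finset.HasAntidiagonal.antidiagonal n, dkTerm a p.1 p.2

lemma dkTerm_succ (a : ℂ) (i j : ℕ) :
    dkTerm a (i + 1) (j + 1) = X * dkTerm a (i + 1) j - C a * dkTerm a i j := by
  unfold dkTerm
  rw [Nat.choose_succ_succ, Nat.add_sub_add_right]
  rcases Nat.lt_or_ge j (i + 1) with h | h
  · rw [Nat.choose_eq_zero_of_lt h]
    simp [pow_succ]
    ring
  · obtain ⟨k, rfl⟩ := Nat.exists_eq_add_of_le h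
    rw [show i + 1 + k - i = k + 1 by omega, show i + 1 + k - (i + 1) = k by omega]
    simp [pow_succ]
    ring

lemma dkE_rec (a : ℂ) (n : ℕ) : dkE a (n + 2) = X * dkE a (n + 1) - C a * dkE a n := by
  unfold dkE
  rw [Finset.Nat.antidiagonal_succ_succ', Finset.Nat.antidiagonal_succ]
  simp only [Finset.sum_cons, Finset.sum_map, Function.Embedding.prodMap, Prod.map,
    Function.Embedding.coeFn_mk, Function.Embedding.refl_apply, Nat.succ_eq_add_one,
    dkTerm_succ, Finset.sum_sub_distrib, ← Finset.mul_sum]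
  simp [dkTerm, pow_succ]
  ring

lemma dk_eq (a : ℂ) : ∀ n : ℕ, dickson 3 a (n + 1) = X * dkE a n
  | 0 => by simp [dkE, dkTerm]
  | 1 => by
    rw [dickson_add_two]
    simp [dkE, dkTerm, Finset.Nat.antidiagonal_succ]
  | n + 2 => by
    rw [dickson_add_two, dk_eq a (n + 1), dk_eq a n, dkE_rec]
    ring

/-- Explicit formula for the Dickson polynomials of the third kind over `ℂ`:
`F_n(x,a) = Σ_{i=0}^{⌊n/2⌋} ((n−2i)/(n−i))·C(n−i,i)·(−a)^i·x^{n−2i}` for `n ≥ 1`. -/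
theorem dickson_third_kind_explicit (a : ℂ) (n : ℕ) (hn : 1 ≤ n) :
    dickson 3 a n
      = ∑ i ∈ Finset.range (n / 2 + 1),
          C (((n : ℂ) - 2 * (i : ℂ)) / ((n : ℂ) - (i : ℂ)) * ((n - i).choose i : ℂ)
              * (-a) ^ i)
            * X ^ (n - 2 * i) := by
  obtain ⟨m, rfl⟩ := Nat.exists_eq_add_of_le' hn
  rw [dk_eq, dkE, Finset.Nat.sum_antidiagonal_eq_sum_range_succ (dkTerm a), Finset.mul_sum]
  symm
  have hsub : Finset.range ((m + 1) / 2 + 1) ⊆ Finset.range m.succ := by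
    intro i hi
    simp only [Finset.mem_range] at *
    omega
  rw [← Finset.sum_subset hsub]
  · refine Finset.sum_congr rfl fun i hi => ?_
    have h2 : 2 * i ≤ m + 1 := by
      simp only [Finset.mem_range] at hi
      omega
    have him : i ≤ m := by omega
    obtain ⟨k, rfl⟩ := Nat.exists_eq_add_of_le him
    have key : (((i + k + 1 : ℕ) : ℂ) - 2 * (i : ℂ)) / (((i + k + 1 : ℕ) : ℂ) - (i : ℂ))
        * ((i + k + 1 - i).choose i : ℂ) = (k.choose i : ℂ) := by
      have h := Nat.choose_mul_succ_eq k i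
      have hk : i ≤ k + 1 := by omega
      have h' : (k.choose i : ℂ) * (k + 1) = ((k + 1).choose i : ℂ) * ((k : ℂ) + 1 - i) := by
        have := congrArg (Nat.cast : ℕ → ℂ) h
        push_cast [Nat.cast_sub hk] at this
        exact this
      have hne : (k : ℂ) + 1 ≠ 0 := by exact_mod_cast Nat.succ_ne_zero k
      rw [show i + k + 1 - i = k + 1 by omega]
      push_cast
      rw [show (i : ℂ) + k + 1 - i = k + 1 by ring, div_mul_eq_mul_div, div_eq_iff hne, h']
      ring
    rw [key, dkTerm, show i + k - i = k by omega]
    rcases Nat.lt_or_ge k i with h | h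
    · simp [Nat.choose_eq_zero_of_lt h]
    · rw [show i + k + 1 - 2 * i = (k - i) + 1 by omega, pow_succ]
      ring
  · intro i _ hi
    simp only [Finset.mem_range] at hi
    rw [dkTerm, Nat.choose_eq_zero_of_lt (by omega)]
    simp
end
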